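/- Let C1 ⊆ F_{q^m}^n be a linear code and C2 ⊊ C1 a subcode. Then the i-th RGRW M_{R,i}(C1,C2) is strictly increasing in i on 0 ≤ i ≤ dim C1 − dim C2, M_{R,0}(C1,C2) = 0, and for every 0 ≤ i ≤ dim C1 − dim C2 one has M_{R,i}(C1,C2) = min{ j : K_{R,j}(C1,C2) = i } = min{ dim V : V ∈ Γ(F_{q^m}^n), dim(C1 ∩ V) − dim(C2 ∩ V) = i }. -/

import Mathlib

open scoped BigOperators

noncomputable section

variable (q : ℕ) (Fq : Type*) {Fqm : Type*} [Field Fq] [Field Fqm] [Algebra Fq Fqm]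

/-- `V = V^q`: the image of `V` under the coordinatewise `q`-th power map equals `V`
(membership in the family `Γ(F_{q^m}^n)`). -/
def IsGalClosed {n : ℕ} (V : Submodule Fqm (Fin n → Fqm)) : Prop :=
  (fun v : Fin n → Fqm => fun i => v i ^ q) '' (V : Set (Fin n → Fqm)) =
    (V : Set (Fin n → Fqm))

/-- The `i`-th relative dimension/intersection profile (RDIP) of `C1` and `C2`. -/
noncomputable def RDIP {n : ℕ} (C1 C2 : Submodule Fqm (Fin n → Fqm)) (i : ℕ) : ℕ :=
  sSup {d : ℕ | ∃ V : Submodule Fqm (Fin n → Fqm), IsGalClosed q V ∧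
    Module.finrank Fqm ↥V = i ∧
    d = Module.finrank Fqm ↥(C1 ⊓ V) - Module.finrank Fqm ↥(C2 ⊓ V)}

/-- The `i`-th relative generalized rank weight (RGRW) of `C1` and `C2`. -/
noncomputable def RGRW {n : ℕ} (C1 C2 : Submodule Fqm (Fin n → Fqm)) (i : ℕ) : ℕ :=
  sInf {d : ℕ | ∃ V : Submodule Fqm (Fin n → Fqm), IsGalClosed q V ∧
    d = Module.finrank Fqm ↥V ∧
    i ≤ Module.finrank Fqm ↥(C1 ⊓ V) - Module.finrank Fqm ↥(C2 ⊓ V)}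

/-- The rank weight `d_R(x,0)` of a vector: the `F_q`-dimension of the `F_q`-span of
its coordinates. -/
noncomputable def rankWeight {ι : Type*} (x : ι → Fqm) : ℕ :=
  Module.finrank Fq ↥(Submodule.span Fq (Set.range x))

/-- The minimum rank distance of a (nonzero) linear code. -/
noncomputable def minRankDist {ι : Type*} (C : Submodule Fqm (ι → Fqm)) : ℕ :=
  sInf {d : ℕ | ∃ x, x ∈ C ∧ x ≠ 0 ∧ d = rankWeight Fq x}

/-- The dual code with respect to the standard bilinear form `⟨x,y⟩ = ∑ i, x i * y i`. -/
def dualCode {n : ℕ} (V : Submodule Fqm (Fin n → Fqm)) : Submodule Fqm (Fin n → Fqm) where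
  carrier := {x | ∀ v ∈ V, ∑ i, x i * v i = 0}
  add_mem' := by
    intro a b ha hb v hv
    have h1 := ha v hv
    have h2 := hb v hv
    simp only [Set.mem_setOf_eq] at *
    simp only [Pi.add_apply, add_mul]
    rw [Finset.sum_add_distrib, h1, h2, add_zero]
  zero_mem' := by
    intro v hv
    simp
  smul_mem' := by
    intro c x hx v hv
    have h := hx v hv
    simp only [Set.mem_setOf_eq] at *
    simp only [Pi.smul_apply, smul_eq_mul, mul_assoc]
    rw [← Finset.mul_sum, h, mul_zero]


/-!
Write `f V = dim (C1 ∩ V) - dim (C2 ∩ V)`. Cutting a nonzero space of `Γ` by a coordinate hyperplane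
that does not contain it produces a member of `Γ` of dimension one less, and this lowers `f` by at
most one. Hence a space of `Γ` of minimal dimension among those with `f V ≥ i` has `f V = i`
exactly, and every `V` in `Γ` with `f V > i` has dimension larger than that minimum. So the maximum
of `f` over the `j`-dimensional spaces of `Γ` is `i` at the minimal dimension and at no smaller `j`.
-/

section RelDim

open Module

theorem finrank_inf_ker_add_one {K E : Type*} [Field K] [AddCommGroup E] [Module K E]
    [FiniteDimensional K E] {f : Dual K E} {V : Submodule K E} (hV : ¬V ≤ LinearMap.ker f) :
    finrank K ↥(V ⊓ LinearMap.ker f) + 1 = finrank K V := by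
  have hf : f.domRestrict V ≠ 0 := fun h =>
    hV fun v hv => by simpa using LinearMap.congr_fun h ⟨v, hv⟩
  have hker : (LinearMap.ker (f.domRestrict V)).map V.subtype = V ⊓ LinearMap.ker f := by
    rw [LinearMap.ker_domRestrict, Submodule.map_comap_subtype]
  rw [← hker, Submodule.finrank_map_subtype_eq]
  exact Dual.finrank_ker_add_one_of_ne_zero hf

variable {K E : Type*} [DivisionRing K] [AddCommGroup E] [Module K E]

/-- The relative intersection dimension `dim (C1 ∩ V) - dim (C2 ∩ V)`, the quantity that the RDIP
maximizes and the RGRW bounds from below. The subtraction is truncated, as in `RDIP` and `RGRW`. -/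
def relDim (C1 C2 V : Submodule K E) : ℕ :=
  finrank K ↥(C1 ⊓ V) - finrank K ↥(C2 ⊓ V)

theorem relDim_top (C1 C2 : Submodule K E) : relDim C1 C2 ⊤ = finrank K C1 - finrank K C2 := by
  rw [relDim, inf_top_eq, inf_top_eq]

variable [FiniteDimensional K E]

theorem relDim_le_finrank (C1 C2 V : Submodule K E) : relDim C1 C2 V ≤ finrank K V :=
  (Nat.sub_le _ _).trans (Submodule.finrank_mono inf_le_right)

theorem finrank_inf_add_finrank_le (C : Submodule K E) {V W : Submodule K E} (hWV : W ≤ V) :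
    finrank K ↥(C ⊓ V) + finrank K W ≤ finrank K ↥(C ⊓ W) + finrank K V := by
  have hinf : C ⊓ V ⊓ W = C ⊓ W := by rw [inf_assoc, inf_eq_right.mpr hWV]
  have hsup : finrank K ↥(C ⊓ V ⊔ W) ≤ finrank K V :=
    Submodule.finrank_mono (sup_le inf_le_right hWV)
  have hadd := Submodule.finrank_sup_add_finrank_inf_eq (C ⊓ V) W
  rw [hinf] at hadd
  lia

theorem relDim_add_finrank_le (C1 C2 : Submodule K E) {V W : Submodule K E} (hWV : W ≤ V) :
    relDim C1 C2 V + finrank K W ≤ relDim C1 C2 W + finrank K V := by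
  have hC1 := finrank_inf_add_finrank_le C1 hWV
  have hC2 : finrank K ↥(C2 ⊓ W) ≤ finrank K ↥(C2 ⊓ V) :=
    Submodule.finrank_mono (inf_le_inf_left C2 hWV)
  have hW : finrank K W ≤ finrank K V := Submodule.finrank_mono hWV
  unfold relDim
  lia

end RelDim

theorem ne_zero_of_pow_surjective {M : Type*} [Monoid M] [Nontrivial M] {r : ℕ}
    (hr : Function.Surjective fun x : M => x ^ r) : r ≠ 0 := by
  rintro rfl
  obtain ⟨x, hx⟩ := exists_ne (1 : M)
  obtain ⟨y, hy⟩ := hr x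
  exact hx (hy.symm.trans (pow_zero y))

theorem pow_card_surjective (F L : Type*) [Field F] [Fintype F] [Field L] [Algebra F L]
    [Algebra.IsAlgebraic F L] : Function.Surjective fun x : L => x ^ Fintype.card F := by
  rw [← FiniteField.coe_frobeniusAlgEquivOfAlgebraic]
  exact (FiniteField.frobeniusAlgEquivOfAlgebraic F L).surjective

section GalClosed

open Module

variable {K : Type*} [Field K] {r n : ℕ} {C1 C2 V : Submodule K (Fin n → K)} {i j : ℕ}

theorem isGalClosed_bot (hr : r ≠ 0) : IsGalClosed r (⊥ : Submodule K (Fin n → K)) := by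
  simp [IsGalClosed, hr, Pi.zero_def]

theorem isGalClosed_top (hr : Function.Surjective fun x : K => x ^ r) :
    IsGalClosed r (⊤ : Submodule K (Fin n → K)) := by
  rw [IsGalClosed, Submodule.top_coe, Set.image_univ, Set.range_eq_univ]
  exact hr.comp_left

theorem IsGalClosed.inf_ker_proj (hr : r ≠ 0) (hV : IsGalClosed r V) (k : Fin n) :
    IsGalClosed r (V ⊓ LinearMap.ker (LinearMap.proj k : (Fin n → K) →ₗ[K] K)) := by
  have hker (v : Fin n → K) : v k ^ r = 0 ↔ v k = 0 := pow_eq_zero_iff hr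
  ext x
  constructor
  · rintro ⟨v, ⟨hv, hvk⟩, rfl⟩
    exact ⟨hV.subset ⟨v, hv, rfl⟩, (hker v).mpr hvk⟩
  · rintro ⟨hx, hxk⟩
    obtain ⟨v, hv, rfl⟩ := hV.superset hx
    exact ⟨v, ⟨hv, (hker v).mp hxk⟩, rfl⟩

theorem IsGalClosed.exists_le_finrank_add_one (hr : r ≠ 0) (hV : IsGalClosed r V) (hne : V ≠ ⊥) :
    ∃ W ≤ V, IsGalClosed r W ∧ finrank K W + 1 = finrank K V := by
  obtain ⟨v, hv, hv0⟩ := V.ne_bot_iff.mp hne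
  obtain ⟨k, hk⟩ := Function.ne_iff.mp hv0
  exact ⟨_, inf_le_left, hV.inf_ker_proj hr k, finrank_inf_ker_add_one fun h => hk (h hv)⟩

theorem RGRW_le_finrank (hV : IsGalClosed r V) (hi : i ≤ relDim C1 C2 V) :
    RGRW r C1 C2 i ≤ finrank K V :=
  Nat.sInf_le ⟨V, hV, rfl, hi⟩

theorem RGRW_lt_finrank (hr : r ≠ 0) (hV : IsGalClosed r V) (hi : i < relDim C1 C2 V) :
    RGRW r C1 C2 i < finrank K V := by
  have hne : V ≠ ⊥ := by
    rintro rfl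
    have := relDim_le_finrank C1 C2 ⊥
    rw [finrank_bot] at this
    lia
  obtain ⟨W, hWV, hW, hdim⟩ := hV.exists_le_finrank_add_one hr hne
  have hstep := relDim_add_finrank_le C1 C2 hWV
  have hle : RGRW r C1 C2 i ≤ finrank K W := RGRW_le_finrank hW (by lia)
  lia

theorem RGRW_zero (hr : r ≠ 0) (C1 C2 : Submodule K (Fin n → K)) : RGRW r C1 C2 0 = 0 := by
  have hle : RGRW r C1 C2 0 ≤ finrank K (⊥ : Submodule K (Fin n → K)) :=
    RGRW_le_finrank (isGalClosed_bot hr) (Nat.zero_le _)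
  rwa [finrank_bot, Nat.le_zero] at hle

theorem exists_finrank_eq_RGRW (hr : Function.Surjective fun x : K => x ^ r)
    (hi : i ≤ finrank K C1 - finrank K C2) :
    ∃ V, IsGalClosed r V ∧ finrank K V = RGRW r C1 C2 i ∧ relDim C1 C2 V = i := by
  have htop : i ≤ relDim C1 C2 ⊤ := hi.trans_eq (relDim_top C1 C2).symm
  have hne : {d | ∃ V, IsGalClosed r V ∧ d = finrank K V ∧ i ≤ relDim C1 C2 V}.Nonempty :=
    ⟨_, ⊤, isGalClosed_top hr, rfl, htop⟩
  obtain ⟨V, hV, (hdim : RGRW r C1 C2 i = finrank K V), hle⟩ := Nat.sInf_mem hne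
  refine ⟨V, hV, hdim.symm, hle.antisymm' (not_lt.mp fun hlt => ?_)⟩
  exact (RGRW_lt_finrank (ne_zero_of_pow_surjective hr) hV hlt).ne hdim

theorem RGRW_lt_RGRW (hr : Function.Surjective fun x : K => x ^ r) (hij : i < j)
    (hj : j ≤ finrank K C1 - finrank K C2) : RGRW r C1 C2 i < RGRW r C1 C2 j := by
  obtain ⟨V, hV, hdim, rfl⟩ := exists_finrank_eq_RGRW hr hj
  exact (RGRW_lt_finrank (ne_zero_of_pow_surjective hr) hV hij).trans_eq hdim

theorem isLeast_RGRW_relDim_eq (hr : Function.Surjective fun x : K => x ^ r)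
    (hi : i ≤ finrank K C1 - finrank K C2) :
    IsLeast {d | ∃ V, IsGalClosed r V ∧ d = finrank K V ∧ relDim C1 C2 V = i}
      (RGRW r C1 C2 i) := by
  constructor
  · obtain ⟨V, hV, hdim, hrel⟩ := exists_finrank_eq_RGRW hr hi
    exact ⟨V, hV, hdim.symm, hrel⟩
  · rintro _ ⟨V, hV, rfl, hrel⟩
    exact RGRW_le_finrank hV hrel.ge

theorem bddAbove_relDim (r : ℕ) (C1 C2 : Submodule K (Fin n → K)) (j : ℕ) :
    BddAbove {d | ∃ V, IsGalClosed r V ∧ finrank K V = j ∧ d = relDim C1 C2 V} := by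
  refine ⟨j, ?_⟩
  rintro _ ⟨V, -, rfl, rfl⟩
  exact relDim_le_finrank C1 C2 V

theorem relDim_le_RDIP (C1 C2 : Submodule K (Fin n → K)) (hV : IsGalClosed r V) :
    relDim C1 C2 V ≤ RDIP r C1 C2 (finrank K V) :=
  le_csSup (bddAbove_relDim r C1 C2 _) ⟨V, hV, rfl, rfl⟩

-- `RDIP r C1 C2 j` is the junk value `sSup ∅ = 0` when no member of `Γ` has dimension `j`.
theorem exists_relDim_eq_RDIP (h : RDIP r C1 C2 j ≠ 0) :
    ∃ V, IsGalClosed r V ∧ finrank K V = j ∧ relDim C1 C2 V = RDIP r C1 C2 j := by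
  have hne : {d | ∃ V, IsGalClosed r V ∧ finrank K V = j ∧ d = relDim C1 C2 V}.Nonempty := by
    refine Set.nonempty_iff_ne_empty.mpr fun hempty => h ?_
    exact (congrArg sSup hempty).trans csSup_empty
  obtain ⟨V, hV, hdim, hrel⟩ := Nat.sSup_mem hne (bddAbove_relDim r C1 C2 j)
  exact ⟨V, hV, hdim, hrel.symm⟩

theorem RGRW_RDIP_le (hr : r ≠ 0) (C1 C2 : Submodule K (Fin n → K)) (j : ℕ) :
    RGRW r C1 C2 (RDIP r C1 C2 j) ≤ j := by
  by_cases h : RDIP r C1 C2 j = 0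
  · rw [h, RGRW_zero hr]
    exact Nat.zero_le j
  · obtain ⟨V, hV, hdim, hrel⟩ := exists_relDim_eq_RDIP h
    exact (RGRW_le_finrank hV hrel.ge).trans_eq hdim

theorem RDIP_RGRW (hr : Function.Surjective fun x : K => x ^ r)
    (hi : i ≤ finrank K C1 - finrank K C2) : RDIP r C1 C2 (RGRW r C1 C2 i) = i := by
  apply le_antisymm
  · by_contra! hlt
    obtain ⟨V, hV, hdim, hrel⟩ := exists_relDim_eq_RDIP (Nat.ne_zero_of_lt hlt)
    rw [← hrel] at hlt
    exact (RGRW_lt_finrank (ne_zero_of_pow_surjective hr) hV hlt).ne' hdim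
  · obtain ⟨V, hV, hdim, hrel⟩ := exists_finrank_eq_RGRW hr hi
    calc
      i = relDim C1 C2 V := hrel.symm
      _ ≤ RDIP r C1 C2 (finrank K V) := relDim_le_RDIP C1 C2 hV
      _ = RDIP r C1 C2 (RGRW r C1 C2 i) := by rw [hdim]

theorem isLeast_RGRW_RDIP_eq (hr : Function.Surjective fun x : K => x ^ r)
    (hi : i ≤ finrank K C1 - finrank K C2) :
    IsLeast {j | RDIP r C1 C2 j = i} (RGRW r C1 C2 i) := by
  refine ⟨RDIP_RGRW hr hi, ?_⟩
  rintro j rfl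
  exact RGRW_RDIP_le (ne_zero_of_pow_surjective hr) C1 C2 j

theorem stmt2_general (hr : Function.Surjective fun x : K => x ^ r)
    (C1 C2 : Submodule K (Fin n → K)) :
    (∀ i j, i < j → j ≤ finrank K C1 - finrank K C2 → RGRW r C1 C2 i < RGRW r C1 C2 j) ∧
    RGRW r C1 C2 0 = 0 ∧
    (∀ i, i ≤ finrank K C1 - finrank K C2 →
      RGRW r C1 C2 i = sInf {j : ℕ | RDIP r C1 C2 j = i} ∧
      RGRW r C1 C2 i = sInf {d : ℕ | ∃ V : Submodule K (Fin n → K),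
        IsGalClosed r V ∧ d = finrank K V ∧
        finrank K ↥(C1 ⊓ V) - finrank K ↥(C2 ⊓ V) = i}) :=
  ⟨fun _ _ => RGRW_lt_RGRW hr, RGRW_zero (ne_zero_of_pow_surjective hr) C1 C2, fun _ hi =>
    ⟨(isLeast_RGRW_RDIP_eq hr hi).csInf_eq.symm, (isLeast_RGRW_relDim_eq hr hi).csInf_eq.symm⟩⟩

end GalClosed

/-- The RGRW `M_{R,i}(C1,C2)` is strictly increasing in `i` on
`0 ≤ i ≤ dim C1 - dim C2`, `M_{R,0}(C1,C2) = 0`, and for every such `i`,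
`M_{R,i}(C1,C2) = min{ j : K_{R,j}(C1,C2) = i }
               = min{ dim V : V ∈ Γ, dim(C1 ∩ V) - dim(C2 ∩ V) = i }`. -/
theorem stmt2 (m n : ℕ) [Fintype Fq] [Fintype Fqm]
    (hq : Fintype.card Fq = q) (hm : Module.finrank Fq Fqm = m)
    (C1 C2 : Submodule Fqm (Fin n → Fqm)) (h12 : C2 < C1) :
    (∀ i j, i < j → j ≤ Module.finrank Fqm ↥C1 - Module.finrank Fqm ↥C2 →
      RGRW q C1 C2 i < RGRW q C1 C2 j) ∧
    RGRW q C1 C2 0 = 0 ∧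
    (∀ i, i ≤ Module.finrank Fqm ↥C1 - Module.finrank Fqm ↥C2 →
      RGRW q C1 C2 i = sInf {j : ℕ | RDIP q C1 C2 j = i} ∧
      RGRW q C1 C2 i = sInf {d : ℕ | ∃ V : Submodule Fqm (Fin n → Fqm),
        IsGalClosed q V ∧ d = Module.finrank Fqm ↥V ∧
        Module.finrank Fqm ↥(C1 ⊓ V) - Module.finrank Fqm ↥(C2 ⊓ V) = i}) :=
  stmt2_general (hq ▸ pow_card_surjective Fq Fqm) C1 C2

end
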